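/- Suppose a_i b_j ∉ q^{−ℕ} for all 1 ≤ i, j ≤ n+1. Then Σ_{i=1}^{n+1} (−1)^{i−1} J(â_i) = (1−q)ⁿ (q)_∞ⁿ (a_1⋯a_{n+1} b_1⋯b_{n+1})_∞ / ∏_{i=1}^{n+1} ∏_{j=1}^{n+1} (a_i b_j)_∞ · ∏_{1≤i<j≤n+1} a_j θ(a_i/a_j), where â_i := (a_1,…,a_{i−1},a_{i+1},…,a_{n+1}). (Evans's q-Dixon–Anderson summation; Corollary 4.2 of the paper.) -/

import Mathlib

open scoped BigOperators
open Finset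

/-- The infinite q-Pochhammer symbol `(a)_∞ = ∏_{i=0}^∞ (1 - qⁱ a)`. -/
noncomputable def qp (q a : ℂ) : ℂ := ∏' i : ℕ, (1 - q ^ i * a)

/-- The theta function `θ(a) = (a)_∞ (q/a)_∞`. -/
noncomputable def th (q a : ℂ) : ℂ := qp q a * qp q (q / a)

/-- Summand of the Jackson integral of Dixon–Anderson type. -/
noncomputable def daTerm {n : ℕ} (q : ℂ) (a b : Fin (n + 1) → ℂ) (x : Fin n → ℂ)
    (ν : Fin n → ℤ) : ℂ :=
  (∏ i, (x i * q ^ ν i *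
      ∏ j, qp q (q * (a j)⁻¹ * (x i * q ^ ν i)) / qp q (b j * (x i * q ^ ν i)))) *
    ∏ i, ∏ j ∈ Finset.Ioi i, (x j * q ^ ν j - x i * q ^ ν i)

/-- The Jackson integral of Dixon–Anderson type `J(x)`. -/
noncomputable def daSum {n : ℕ} (q : ℂ) (a b : Fin (n + 1) → ℂ) (x : Fin n → ℂ) : ℂ :=
  (1 - q) ^ n * ∑' ν : Fin n → ℤ, daTerm q a b x ν

/-!
By the Vandermonde determinant, `J(âᵢ)` is `(1 - q)ⁿ` times a determinant of one-dimensional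
moments, and the alternating sum is the Laplace expansion, along a column of ones, of a bordered
determinant `D(b)`. Telescoping the weight along `x ↦ q x` gives linear relations between the
moments; replacing one `bⱼ` by `q bⱼ` shifts the moments. Together they show that
`G(b) = D(b) ∏ᵢⱼ (aᵢ bⱼ)_∞` satisfies `G(b) = (1 - A B) G(…, q bⱼ, …)` with `A = a₁⋯aₙ₊₁`,
`B = b₁⋯bₙ₊₁`. Iterating until every `bⱼ` has been scaled to `0` yields `G(b) = (A B)_∞ D(0)`.
Since `D(0)` does not depend on `b`, it can be read off from `bⱼ = q / aⱼ`, where the weight is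
identically `1`, the moments are geometric series and `D(b)` is a Vandermonde determinant; this
choice is unavailable only if `aⱼ = aᵢ q^(m+1)` for some `i ≠ j`, and then two rows of `D(0)`
agree.
-/

open Filter Topology

/-! ### Sums of products and determinants -/

section PiSums

variable {κ R : Type*} [NormedCommRing R]

lemma summable_norm_prod_pi : ∀ {n : ℕ} {f : Fin n → κ → R},
    (∀ i, Summable fun m => ‖f i m‖) → Summable fun ν : Fin n → κ => ‖∏ i, f i (ν i)‖
  | 0, _, _ => (hasSum_unique _).summable
  | n + 1, f, hf => by
    rw [← (Fin.consEquiv fun _ : Fin (n + 1) => κ).summable_iff]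
    refine ((hf 0).mul_norm (summable_norm_prod_pi fun i => hf i.succ)).congr fun p => ?_
    simp [Fin.prod_univ_succ, Fin.consEquiv]

variable [CompleteSpace R]

lemma hasSum_prod_pi {n : ℕ} {f : Fin n → κ → R} (hf : ∀ i, Summable fun m => ‖f i m‖) :
    HasSum (fun ν : Fin n → κ => ∏ i, f i (ν i)) (∏ i, ∑' m, f i m) := by
  induction n with
  | zero => simp
  | succ n ih =>
    have hmul := summable_mul_of_summable_norm (f := f 0)
      (g := fun ν : Fin n → κ => ∏ i : Fin n, f i.succ (ν i)) (hf 0)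
      (summable_norm_prod_pi fun i => hf i.succ)
    rw [← (Fin.consEquiv fun _ : Fin (n + 1) => κ).hasSum_iff, Fin.prod_univ_succ]
    refine ((hf 0).of_norm.hasSum.mul (ih fun i => hf i.succ) hmul).congr_fun fun p => ?_
    simp [Fin.prod_univ_succ, Fin.consEquiv]

lemma hasSum_det_pi {n : ℕ} {g : Fin n → Fin n → κ → R}
    (hg : ∀ i j, Summable fun m => ‖g i j m‖) :
    HasSum (fun ν : Fin n → κ => (Matrix.of fun i j => g i j (ν i)).det)
      (Matrix.of fun i j => ∑' m, g i j m).det := by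
  simp only [← Matrix.det_transpose (Matrix.of _), Matrix.det_apply', Matrix.transpose_apply,
    Matrix.of_apply]
  exact hasSum_sum fun σ _ => (hasSum_prod_pi fun i => hg i (σ i)).mul_left _

end PiSums

/-! ### Polynomial identities -/

section Polynomial

variable {R : Type*} [CommRing R]

lemma prod_sub_mul_eq_sum_powersetCard {ι : Type*} [Fintype ι] (c : ι → R) (x y : R) :
    ∏ i, (y - c i * x) = ∑ r ∈ range (Fintype.card ι + 1),
      (∑ t ∈ powersetCard r univ, ∏ i ∈ t, -c i) * x ^ r * y ^ (Fintype.card ι - r) := by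
  classical
  have hsub : ∀ i, y - c i * x = -c i * x + y := fun i => by ring
  simp only [hsub, prod_add, sum_powerset, card_univ, sum_mul]
  refine sum_congr rfl fun r _ => sum_congr rfl fun t ht => ?_
  rw [prod_mul_distrib, prod_const, prod_const, card_sdiff_of_subset (subset_univ t), card_univ,
    (mem_powersetCard.1 ht).2]

lemma exists_sum_eq_prod_sub_prod {n : ℕ} (c d : Fin (n + 1) → R) :
    ∃ e : Fin (n + 1) → R, ∀ x y, ∑ r, e r * x ^ ((r : ℕ) + 1) * y ^ (n - (r : ℕ)) =
      ∏ j, (y - c j * x) - ∏ j, (y - d j * x) := by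
  refine ⟨fun r => (∑ t ∈ powersetCard (r + 1) univ, ∏ i ∈ t, -c i) -
    ∑ t ∈ powersetCard (r + 1) univ, ∏ i ∈ t, -d i, fun x y => ?_⟩
  simp only [prod_sub_mul_eq_sum_powersetCard, Fintype.card_fin, sum_range_succ' _ (n + 1),
    ← Fin.sum_univ_eq_sum_range (n := n + 1), powersetCard_zero, sum_singleton, prod_empty,
    Nat.add_sub_add_right, add_sub_add_right_eq_sub]
  rw [← sum_sub_distrib]
  exact sum_congr rfl fun r _ => by ring

/-- The matrix whose columns are the coefficient vectors of the polynomials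
`∑ᵣ cᵣ Xʳ, 1 - β X, X - β X², …, X^(n-1) - β Xⁿ`. -/
def shiftMatrix {n : ℕ} (c : Fin (n + 1) → R) (β : R) :
    Matrix (Fin (n + 1)) (Fin (n + 1)) R :=
  Matrix.of fun r => Fin.cons (c r) fun s : Fin n =>
    (if r = s.castSucc then 1 else 0) - if r = s.succ then β else 0

lemma det_shiftMatrix {n : ℕ} (c : Fin (n + 1) → R) (β : R) :
    (shiftMatrix c β).det = (-1) ^ n * ∑ r, c r * β ^ (n - (r : ℕ)) := by
  -- Evaluating the columns at `X = β⁻¹` kills all of them but the first; `v` is `βⁿ` times the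
  -- resulting combination of rows, and it may replace the last row since `Mₙ` has coefficient `1`.
  set M := shiftMatrix c β with hM
  set v : Fin (n + 1) → R := ∑ r : Fin (n + 1), β ^ (n - (r : ℕ)) • M r with hv
  have hv0 : v 0 = ∑ r, c r * β ^ (n - (r : ℕ)) := by
    simp [hv, hM, shiftMatrix, Finset.sum_apply, mul_comm]
  have hvs : ∀ s : Fin n, v s.succ = 0 := fun s => by
    have hexp : n - (s : ℕ) = n - (s + 1) + 1 := by omega
    simp [hv, hM, shiftMatrix, Finset.sum_apply, mul_sub, hexp, pow_succ]
  have hdet : M.det = (M.updateRow (Fin.last n) v).det := by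
    simpa using (Matrix.det_updateRow_sum M (Fin.last n) fun r => β ^ (n - (r : ℕ))).symm
  have hminor : (M.submatrix (Fin.last n).succAbove Fin.succ).det = 1 := by
    rw [Matrix.det_of_isLowerTriangular]
    · refine prod_eq_one fun i _ => ?_
      simp [hM, shiftMatrix, Fin.castSucc_lt_succ.ne]
    · intro i s (his : i < s)
      have his' : i.castSucc ≠ s.succ :=
        (Fin.castSucc_lt_succ.trans (Fin.succ_lt_succ_iff.2 his)).ne
      simp [hM, shiftMatrix, his', his.ne]
  rw [hdet, Matrix.det_succ_row _ (Fin.last n), Fin.sum_univ_succ]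
  simp only [Matrix.submatrix_updateRow_succAbove, Fin.succAbove_zero, hminor]
  simp [hvs, hv0]

/-- The matrix whose first column consists of ones and whose other columns are `m · 0`, …,
`m · (n - 1)`. -/
def borderedMatrix {n : ℕ} (m : Fin (n + 1) → ℕ → R) : Matrix (Fin (n + 1)) (Fin (n + 1)) R :=
  Matrix.of fun i => Fin.cons 1 fun r : Fin n => m i r

lemma det_borderedMatrix_eq_sum {n : ℕ} (m : Fin (n + 1) → ℕ → R) :
    (borderedMatrix m).det = ∑ i : Fin (n + 1),
      (-1) ^ (i : ℕ) * (Matrix.of fun k r : Fin n => m (i.succAbove k) r).det := by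
  rw [Matrix.det_succ_column_zero]
  refine sum_congr rfl fun i _ => ?_
  have hminor : (borderedMatrix m).submatrix i.succAbove Fin.succ =
      Matrix.of fun k r : Fin n => m (i.succAbove k) r := by
    ext k r
    simp [borderedMatrix]
  rw [hminor]
  simp [borderedMatrix]

lemma det_borderedMatrix_eq_mul {n : ℕ} {m m' : Fin (n + 1) → ℕ → R} {c : Fin (n + 1) → R} {β : R}
    (hone : ∀ i, ∑ r : Fin (n + 1), c r * m i r = 1)
    (hshift : ∀ i r, m' i r = m i r - β * m i (r + 1)) :
    (borderedMatrix m').det = (Matrix.of fun i r : Fin (n + 1) => m i r).det *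
      ((-1) ^ n * ∑ r, c r * β ^ (n - (r : ℕ))) := by
  rw [← det_shiftMatrix, ← Matrix.det_mul]
  congr 1
  ext i s
  refine Fin.cases ?_ (fun s => ?_) s
  · simp [borderedMatrix, shiftMatrix, Matrix.mul_apply, mul_comm (m _ _), hone]
  · simp [borderedMatrix, shiftMatrix, Matrix.mul_apply, mul_sub, hshift, mul_comm β]

lemma det_borderedMatrix_mul_pow {n : ℕ} (c : ℕ → R) (x : Fin (n + 1) → R) :
    (borderedMatrix fun i r => c r * x i ^ (r + 1)).det =
      (∏ r ∈ range n, c r) * (Matrix.vandermonde x).det := by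
  have hrow := Matrix.det_mul_row (Fin.cons 1 fun r : Fin n => c r) (Matrix.vandermonde x)
  rw [Fin.prod_cons, one_mul, Fin.prod_univ_eq_prod_range] at hrow
  rw [← hrow]
  congr 1
  ext i s
  refine Fin.cases ?_ (fun s => ?_) s <;> simp [borderedMatrix, Matrix.vandermonde_apply]

end Polynomial

/-! ### The infinite q-Pochhammer symbol -/

section Pochhammer

variable {q : ℂ}

@[simp] lemma qp_zero_right : qp q 0 = 1 := by simp [qp]

variable (hq : ‖q‖ < 1)
include hq

lemma summable_norm_neg_pow_mul (a : ℂ) : Summable fun i : ℕ => ‖-(q ^ i * a)‖ := by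
  simpa using (summable_geometric_of_lt_one (norm_nonneg q) hq).mul_right ‖a‖

lemma multipliable_qp (a : ℂ) : Multipliable fun i : ℕ => 1 - q ^ i * a := by
  simpa [sub_eq_add_neg] using multipliable_one_add_of_summable (summable_norm_neg_pow_mul hq a)

lemma qp_eq_prod_range_mul (a : ℂ) (m : ℕ) :
    qp q a = (∏ i ∈ range m, (1 - q ^ i * a)) * qp q (q ^ m * a) := by
  have htail : Multipliable fun i : ℕ => 1 - q ^ (i + m) * a := by
    simpa only [pow_add, mul_assoc] using multipliable_qp hq (q ^ m * a)
  have hsplit := Multipliable.prod_mul_tprod_nat_mul' (f := fun i : ℕ => 1 - q ^ i * a) htail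
  simp only [pow_add, mul_assoc] at hsplit
  exact hsplit.symm

lemma qp_eq_one_sub_mul (a : ℂ) : qp q a = (1 - a) * qp q (q * a) := by
  simpa using qp_eq_prod_range_mul hq a 1

lemma tendsto_prod_range_qp (a : ℂ) :
    Tendsto (fun m => ∏ i ∈ range m, (1 - q ^ i * a)) atTop (𝓝 (qp q a)) :=
  (multipliable_qp hq a).hasProd.tendsto_prod_nat

lemma qp_eq_zero_iff {a : ℂ} : qp q a = 0 ↔ ∃ m : ℕ, q ^ m * a = 1 := by
  refine ⟨fun h => ?_, fun ⟨m, hm⟩ => tprod_of_exists_eq_zero ⟨m, by simp [hm]⟩⟩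
  by_contra! hne
  refine tprod_one_add_ne_zero_of_summable (f := fun i : ℕ => -(q ^ i * a)) (fun i => ?_)
    (summable_norm_neg_pow_mul hq a) (by simpa [qp, sub_eq_add_neg] using h)
  simpa [← sub_eq_add_neg, sub_eq_zero] using (hne i).symm

lemma qp_pow_mul_ne_zero {a : ℂ} (ha : qp q a ≠ 0) (m : ℕ) : qp q (q ^ m * a) ≠ 0 := by
  rw [qp_eq_prod_range_mul hq a m] at ha
  exact right_ne_zero_of_mul ha

lemma continuous_qp : Continuous (qp q) := by
  refine continuous_iff_continuousAt.2 fun a => ?_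
  have hbound : ∀ᶠ y in 𝓝 a, ∀ i : ℕ, ‖-(q ^ i * y)‖ ≤ ‖q‖ ^ i * (‖a‖ + 1) := by
    filter_upwards [continuous_norm.continuousAt.eventually_lt_const (lt_add_one ‖a‖)] with y hy i
    rw [norm_neg, norm_mul, norm_pow]
    gcongr
  have hlim := tendsto_tprod_one_add_of_dominated_convergence
    ((summable_geometric_of_lt_one (norm_nonneg q) hq).mul_right (‖a‖ + 1))
    (fun i => (by fun_prop : Continuous fun y => -(q ^ i * y)).tendsto a) hbound
  simpa only [← sub_eq_add_neg] using! hlim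

lemma prod_qp_eq_mul_prod_update {ι : Type*} [Fintype ι] [DecidableEq ι] (b : ι → ℂ) (j : ι)
    (y : ℂ) : ∏ s, qp q (b s * y) =
      (1 - b j * y) * ∏ s, qp q (Function.update b j (q * b j) s * y) := by
  simp only [Function.apply_update (fun _ z => qp q (z * y)) b j,
    prod_update_of_mem (mem_univ j), prod_eq_mul_prod_sdiff_singleton_of_mem (mem_univ j)
      fun s => qp q (b s * y), qp_eq_one_sub_mul hq (b j * y), mul_assoc]

end Pochhammer

/-! ### Ratios of q-Pochhammer symbols -/

/-- The ratio `∏ⱼ (cⱼ x)_∞ / (dⱼ x)_∞`. The weight of the Jackson integral is the case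
`c = q • a⁻¹`, `d = b`. -/
noncomputable def qpRatio {ι : Type*} [Fintype ι] (q : ℂ) (c d : ι → ℂ) (x : ℂ) : ℂ :=
  ∏ j, qp q (c j * x) / qp q (d j * x)

section Ratio

variable {ι : Type*} [Fintype ι] {q : ℂ} {c d : ι → ℂ} {x : ℂ}

lemma qpRatio_self (hc : ∀ j, qp q (c j * x) ≠ 0) : qpRatio q c c x = 1 :=
  prod_eq_one fun j _ => div_self (hc j)

lemma qpRatio_pow_smul (c d : ι → ℂ) (x : ℂ) (N ν : ℕ) :
    qpRatio q c (q ^ N • d) (x * q ^ ν) =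
      qpRatio q c 0 (x * q ^ ν) * qpRatio q 0 d (x * q ^ (N + ν)) := by
  simp only [qpRatio, ← prod_mul_distrib]
  refine prod_congr rfl fun j _ => ?_
  have harg : (q ^ N • d) j * (x * q ^ ν) = d j * (x * q ^ (N + ν)) := by
    simp only [Pi.smul_apply, smul_eq_mul]
    ring
  rw [harg]
  simp [div_eq_mul_inv]

variable (hq : ‖q‖ < 1)
include hq

lemma qpRatio_eq_zero {j : ι} {m : ℕ} (h : q ^ m * (c j * x) = 1) : qpRatio q c d x = 0 :=
  prod_eq_zero (mem_univ j) (by rw [(qp_eq_zero_iff hq).2 ⟨m, h⟩, zero_div])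

lemma qpRatio_sub_qpRatio_mul (hd : ∀ j, qp q (d j * x) ≠ 0) :
    qpRatio q c d x - qpRatio q c d (q * x) =
      (∏ j, (1 - c j * x) - ∏ j, (1 - d j * x)) * qpRatio q (q • c) d x := by
  have hnum : qpRatio q c d x = (∏ j, (1 - c j * x)) * qpRatio q (q • c) d x := by
    simp only [qpRatio, ← prod_mul_distrib, Pi.smul_apply, smul_eq_mul]
    refine prod_congr rfl fun j _ => ?_
    rw [qp_eq_one_sub_mul hq (c j * x), mul_assoc q, mul_div_assoc]
  have hden : qpRatio q c d (q * x) = (∏ j, (1 - d j * x)) * qpRatio q (q • c) d x := by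
    simp only [qpRatio, ← prod_mul_distrib, Pi.smul_apply, smul_eq_mul]
    refine prod_congr rfl fun j _ => ?_
    have hj := hd j
    rw [qp_eq_one_sub_mul hq (d j * x)] at hj ⊢
    rw [← mul_div_assoc, mul_div_mul_left _ _ (left_ne_zero_of_mul hj), mul_left_comm, mul_assoc q,
      mul_left_comm (d j)]
  rw [hnum, hden, sub_mul]

lemma qpRatio_update [DecidableEq ι] {j : ι} (hd : qp q (d j * x) ≠ 0) :
    qpRatio q c (Function.update d j (q * d j)) x = (1 - d j * x) * qpRatio q c d x := by
  rw [qp_eq_one_sub_mul hq] at hd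
  simp only [qpRatio, prod_div_distrib]
  rw [prod_qp_eq_mul_prod_update hq d j x, ← mul_div_assoc,
    mul_div_mul_left _ _ (left_ne_zero_of_mul hd)]

lemma tendsto_qpRatio_mul_pow (c d : ι → ℂ) (x : ℂ) :
    Tendsto (fun ν : ℕ => qpRatio q c d (x * q ^ ν)) atTop (𝓝 1) := by
  have hcont : ContinuousAt (qpRatio q c d) 0 := tendsto_finsetProd _ fun j _ => by
    refine ContinuousAt.div ?_ ?_ (by simp) <;>
      exact ((continuous_qp hq).comp (continuous_const_mul _)).continuousAt
  have hpow : Tendsto (fun ν : ℕ => x * q ^ ν) atTop (𝓝 0) := by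
    simpa using (tendsto_pow_atTop_nhds_zero_of_norm_lt_one hq).const_mul x
  have hzero : qpRatio q c d 0 = 1 := by simp [qpRatio]
  exact hzero ▸ hcont.tendsto.comp hpow

lemma exists_norm_qpRatio_le (c d : ι → ℂ) (x : ℂ) :
    ∃ C, ∀ ν : ℕ, ‖qpRatio q c d (x * q ^ ν)‖ ≤ C := by
  obtain ⟨C, hC⟩ := (tendsto_qpRatio_mul_pow hq c d x).norm.bddAbove_range
  exact ⟨C, fun ν => hC ⟨ν, rfl⟩⟩

end Ratio

/-! ### Jackson moments -/

/-- The `r`-th moment `∑_{ν ≥ 0} y^(r+1) w(y)`, `y = x q^ν`: the Jackson integral of `y^r w(y)` over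
`[0, x]` without the factor `1 - q`. -/
noncomputable def jacksonMoment (q : ℂ) (w : ℂ → ℂ) (x : ℂ) (r : ℕ) : ℂ :=
  ∑' ν : ℕ, (x * q ^ ν) ^ (r + 1) * w (x * q ^ ν)

section Moment

variable {q x : ℂ} {w : ℂ → ℂ} {C : ℝ}

lemma jacksonMoment_mul_pow {N : ℕ} (hw : ∀ ν < N, w (x * q ^ ν) = 0) (r : ℕ) :
    jacksonMoment q w (x * q ^ N) r = jacksonMoment q w x r := by
  have hsupp : Function.support (fun ν : ℕ => (x * q ^ ν) ^ (r + 1) * w (x * q ^ ν)) ⊆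
      Set.range (· + N) := fun ν hν => by
    by_contra hlt
    refine hν (mul_eq_zero_of_right _ (hw ν ?_))
    by_contra! hle
    exact hlt ⟨ν - N, Nat.sub_add_cancel hle⟩
  rw [jacksonMoment, jacksonMoment, ← (add_left_injective N).tsum_eq hsupp]
  simp only [pow_add, mul_assoc, mul_comm (q ^ N)]

variable (hq : ‖q‖ < 1)
include hq

lemma summable_norm_mul_pow_mul (x : ℂ) (r : ℕ) (C : ℝ) :
    Summable fun ν : ℕ => ‖(x * q ^ ν) ^ (r + 1)‖ * C := by
  have hgeom : Summable fun ν : ℕ => (‖q‖ ^ (r + 1)) ^ ν :=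
    summable_geometric_of_lt_one (by positivity) (pow_lt_one₀ (norm_nonneg q) hq r.succ_ne_zero)
  refine (hgeom.mul_left (‖x‖ ^ (r + 1) * C)).congr fun ν => ?_
  simp only [norm_mul, norm_pow]
  ring

lemma summable_norm_jacksonMoment (hw : ∀ ν : ℕ, ‖w (x * q ^ ν)‖ ≤ C) (r : ℕ) :
    Summable fun ν : ℕ => ‖(x * q ^ ν) ^ (r + 1) * w (x * q ^ ν)‖ := by
  refine (summable_norm_mul_pow_mul hq x r C).of_nonneg_of_le (fun _ => norm_nonneg _) fun ν => ?_
  rw [norm_mul]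
  gcongr
  exact hw ν

lemma hasSum_jacksonMoment (hw : ∀ ν : ℕ, ‖w (x * q ^ ν)‖ ≤ C) (r : ℕ) :
    HasSum (fun ν : ℕ => (x * q ^ ν) ^ (r + 1) * w (x * q ^ ν)) (jacksonMoment q w x r) :=
  (summable_norm_jacksonMoment hq hw r).of_norm.hasSum

lemma jacksonMoment_sub {w' : ℂ → ℂ} {β : ℂ} (hw : ∀ ν : ℕ, ‖w (x * q ^ ν)‖ ≤ C)
    (hw' : ∀ ν : ℕ, w' (x * q ^ ν) = (1 - β * (x * q ^ ν)) * w (x * q ^ ν)) (r : ℕ) :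
    jacksonMoment q w' x r = jacksonMoment q w x r - β * jacksonMoment q w x (r + 1) := by
  refine HasSum.tsum_eq <| ((hasSum_jacksonMoment hq hw r).sub
    ((hasSum_jacksonMoment hq hw (r + 1)).mul_left β)).congr_fun fun ν => ?_
  rw [hw']
  ring

lemma tendsto_jacksonMoment {u : ℕ → ℂ → ℂ} (hu : ∀ N ν : ℕ, ‖u N (x * q ^ ν)‖ ≤ C)
    (hlim : ∀ ν : ℕ, Tendsto (fun N => u N (x * q ^ ν)) atTop (𝓝 (w (x * q ^ ν)))) (r : ℕ) :
    Tendsto (fun N => jacksonMoment q (u N) x r) atTop (𝓝 (jacksonMoment q w x r)) := by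
  refine tendsto_tsum_of_dominated_convergence (summable_norm_mul_pow_mul hq x r C)
    (fun ν => (hlim ν).const_mul _) (Eventually.of_forall fun N ν => ?_)
  rw [norm_mul]
  gcongr
  exact hu N ν

lemma jacksonMoment_of_eq_one (hw : ∀ ν : ℕ, w (x * q ^ ν) = 1) (r : ℕ) :
    jacksonMoment q w x r = (1 - q ^ (r + 1))⁻¹ * x ^ (r + 1) := by
  have hqr : ‖q ^ (r + 1)‖ < 1 := by
    rw [norm_pow]
    exact pow_lt_one₀ (norm_nonneg q) hq r.succ_ne_zero
  rw [← tsum_geometric_of_norm_lt_one hqr, ← tsum_mul_right]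
  refine tsum_congr fun ν => ?_
  rw [hw]
  ring

end Moment

section RatioMoment

variable {ι : Type*} [Fintype ι] {q x : ℂ} {c d : ι → ℂ} (hq : ‖q‖ < 1)
include hq

lemma qp_mul_mul_pow_ne_zero {b : ℂ} (hb : qp q (b * x) ≠ 0) (ν : ℕ) :
    qp q (b * (x * q ^ ν)) ≠ 0 := by
  simpa only [mul_comm (q ^ ν), mul_assoc] using qp_pow_mul_ne_zero hq hb ν

lemma sum_mul_jacksonMoment_qpRatio (hd : ∀ j, qp q (d j * x) ≠ 0) {n : ℕ} {e : Fin n → ℂ}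
    (he : ∀ y, ∑ r : Fin n, e r * y ^ ((r : ℕ) + 1) = ∏ j, (1 - d j * y) - ∏ j, (1 - c j * y)) :
    ∑ r : Fin n, e r * jacksonMoment q (qpRatio q (q • c) d) x r = 1 - qpRatio q c d x := by
  obtain ⟨C, hC⟩ := exists_norm_qpRatio_le hq (q • c) d x
  set φ : ℕ → ℂ := fun ν => qpRatio q c d (x * q ^ ν) with hφ
  have hstep : ∀ ν : ℕ, ∑ r : Fin n, e r * ((x * q ^ ν) ^ ((r : ℕ) + 1) *
      qpRatio q (q • c) d (x * q ^ ν)) = φ (ν + 1) - φ ν := fun ν => by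
    have hdiff := qpRatio_sub_qpRatio_mul (c := c) hq fun j => qp_mul_mul_pow_ne_zero hq (hd j) ν
    have hnext : φ (ν + 1) = qpRatio q c d (q * (x * q ^ ν)) := by
      simp only [hφ, pow_succ', mul_left_comm x q]
    simp only [← mul_assoc (e _), ← sum_mul, he]
    linear_combination hdiff - hnext
  have hsum := (hasSum_sum (s := univ) fun (r : Fin n) _ =>
    (hasSum_jacksonMoment hq hC r).mul_left (e r)).tendsto_sum_nat
  simp only [hstep, sum_range_sub] at hsum
  refine tendsto_nhds_unique hsum ?_
  simpa [hφ] using (tendsto_qpRatio_mul_pow hq c d x).sub_const (φ 0)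

lemma jacksonMoment_qpRatio_update [DecidableEq ι] {j : ι} (hd : qp q (d j * x) ≠ 0) (r : ℕ) :
    jacksonMoment q (qpRatio q c (Function.update d j (q * d j))) x r =
      jacksonMoment q (qpRatio q c d) x r - d j * jacksonMoment q (qpRatio q c d) x (r + 1) := by
  obtain ⟨C, hC⟩ := exists_norm_qpRatio_le hq c d x
  exact jacksonMoment_sub hq hC (fun ν => qpRatio_update hq (qp_mul_mul_pow_ne_zero hq hd ν)) r

lemma tendsto_jacksonMoment_qpRatio (c d : ι → ℂ) (x : ℂ) (r : ℕ) :
    Tendsto (fun N : ℕ => jacksonMoment q (qpRatio q c (q ^ N • d)) x r) atTop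
      (𝓝 (jacksonMoment q (qpRatio q c 0) x r)) := by
  obtain ⟨C, hC⟩ := exists_norm_qpRatio_le hq c 0 x
  obtain ⟨D, hD⟩ := exists_norm_qpRatio_le hq 0 d x
  refine tendsto_jacksonMoment hq (C := C * D) (fun N ν => ?_) (fun ν => ?_) r
  · rw [qpRatio_pow_smul, norm_mul]
    exact mul_le_mul (hC ν) (hD (N + ν)) (norm_nonneg _) ((norm_nonneg _).trans (hC ν))
  · simpa [qpRatio_pow_smul] using (((tendsto_qpRatio_mul_pow hq 0 d x).comp
      (tendsto_add_atTop_nat ν)).const_mul (qpRatio q c 0 (x * q ^ ν)))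

end RatioMoment

/-! ### The determinant of the Jackson integrals -/

/-- The determinant `D(b)` whose minors along the column of ones are, up to `(1 - q)ⁿ`, the Jackson
integrals at the points `âᵢ`. -/
noncomputable def daDet {n : ℕ} (q : ℂ) (a b : Fin (n + 1) → ℂ) : ℂ :=
  (borderedMatrix fun i => jacksonMoment q (qpRatio q (q • a⁻¹) b) (a i)).det

section Determinant

variable {n : ℕ} {q : ℂ} {a b : Fin (n + 1) → ℂ}

lemma daTerm_eq_det (x : Fin n → ℂ) (ν : Fin n → ℤ) :
    daTerm q a b x ν = (Matrix.of fun i r : Fin n =>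
      (x i * q ^ ν i) ^ ((r : ℕ) + 1) * qpRatio q (q • a⁻¹) b (x i * q ^ ν i)).det := by
  rw [daTerm, ← Matrix.det_vandermonde fun i => x i * q ^ ν i, ← Matrix.det_mul_column]
  congr 1
  ext i r
  simp only [Matrix.of_apply, Matrix.vandermonde_apply, qpRatio, Pi.smul_apply, Pi.inv_apply,
    smul_eq_mul]
  ring

variable (hq : ‖q‖ < 1) (hq0 : q ≠ 0)
include hq hq0

lemma tsum_daTerm_eq_tsum_nat (ha : ∀ i, a i ≠ 0) (k : Fin n → Fin (n + 1)) :
    ∑' ν : Fin n → ℤ, daTerm q a b (fun i => a (k i)) ν =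
      ∑' ν : Fin n → ℕ, daTerm q a b (fun i => a (k i)) fun i => (ν i : ℤ) := by
  refine (Function.Injective.tsum_eq (Nat.cast_injective.comp_left) fun ν hν => ?_).symm
  by_contra hneg
  obtain ⟨i, hi⟩ : ∃ i, ν i < 0 := by
    by_contra! hpos
    exact hneg ⟨fun i => (ν i).toNat, funext fun i => by simpa using hpos i⟩
  refine hν ?_
  rw [daTerm_eq_det]
  refine Matrix.det_eq_zero_of_row_eq_zero i fun r => mul_eq_zero_of_right _ ?_
  obtain ⟨m, hm⟩ : ∃ m : ℕ, ν i = -((m + 1 : ℕ) : ℤ) := ⟨(-ν i - 1).toNat, by omega⟩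
  refine qpRatio_eq_zero hq (j := k i) (m := m) ?_
  have := ha (k i)
  simp only [hm, zpow_neg, zpow_natCast, Pi.smul_apply, Pi.inv_apply, smul_eq_mul]
  field_simp
  ring

lemma daSum_eq_det (ha : ∀ i, a i ≠ 0) (k : Fin n → Fin (n + 1)) :
    daSum q a b (fun i => a (k i)) = (1 - q) ^ n * (Matrix.of fun i r : Fin n =>
      jacksonMoment q (qpRatio q (q • a⁻¹) b) (a (k i)) r).det := by
  have hsum : ∀ i r : Fin n, Summable fun ν : ℕ => ‖(a (k i) * q ^ ν) ^ ((r : ℕ) + 1) *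
      qpRatio q (q • a⁻¹) b (a (k i) * q ^ ν)‖ := fun i r => by
    obtain ⟨C, hC⟩ := exists_norm_qpRatio_le hq (q • a⁻¹) b (a (k i))
    exact summable_norm_jacksonMoment hq hC r
  rw [daSum, tsum_daTerm_eq_tsum_nat hq hq0 ha]
  simp only [daTerm_eq_det, zpow_natCast]
  rw [(hasSum_det_pi hsum).tsum_eq]
  rfl

lemma sum_daSum_eq_daDet (ha : ∀ i, a i ≠ 0) :
    ∑ i : Fin (n + 1), (-1) ^ (i : ℕ) * daSum q a b (fun k => a (i.succAbove k)) =
      (1 - q) ^ n * daDet q a b := by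
  rw [daDet, det_borderedMatrix_eq_sum, mul_sum]
  refine sum_congr rfl fun i _ => ?_
  rw [daSum_eq_det hq hq0 ha, mul_left_comm]

end Determinant

/-! ### The q-difference equation -/

section Recursion

variable {n : ℕ} {q : ℂ} {a b : Fin (n + 1) → ℂ}

-- Telescoping writes the column of ones as a combination of moments, so that the bordered matrix is
-- the matrix of the moments of order `0, …, n` times a `shiftMatrix`.
lemma prod_mul_det_borderedMatrix (hq : ‖q‖ < 1) (ha : ∀ i, a i ≠ 0)
    (hb : ∀ i j, qp q (b j * a i) ≠ 0) {m : Fin (n + 1) → ℕ → ℂ} {β : ℂ}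
    (hm : ∀ i r, m i r = jacksonMoment q (qpRatio q (q • a⁻¹) b) (a i) r -
      β * jacksonMoment q (qpRatio q (q • a⁻¹) b) (a i) (r + 1)) :
    (∏ i, a i) * (borderedMatrix m).det = (Matrix.of fun i r : Fin (n + 1) =>
        jacksonMoment q (qpRatio q (q • a⁻¹) b) (a i) r).det *
      (∏ i, (1 - a i * β) - (∏ i, a i) * ∏ i, (b i - β)) := by
  obtain ⟨e, he⟩ := exists_sum_eq_prod_sub_prod b a⁻¹
  have hone : ∀ i, ∑ r : Fin (n + 1),
      e r * jacksonMoment q (qpRatio q (q • a⁻¹) b) (a i) r = 1 := fun i => by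
    rw [sum_mul_jacksonMoment_qpRatio hq (hb i) fun y => by simpa using he y 1,
      qpRatio_eq_zero hq (j := i) (m := 0) (by simp [ha i]), sub_zero]
  have hβ : ∑ r, e r * β ^ (n - (r : ℕ)) = ∏ i, (β - b i) - ∏ i, (β - (a i)⁻¹) := by
    simpa using he 1 β
  have hprod : (∏ i, a i) * ((-1) ^ n * ∑ r, e r * β ^ (n - (r : ℕ))) =
      ∏ i, (1 - a i * β) - (∏ i, a i) * ∏ i, (b i - β) := by
    have hneg : ∀ f : Fin (n + 1) → ℂ, (-1) ^ n * ∏ i, f i = -∏ i, -f i := fun f => by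
      rw [prod_neg, card_univ, Fintype.card_fin, pow_succ]
      ring
    simp only [hβ, mul_sub, hneg, neg_sub, mul_neg, ← prod_mul_distrib, mul_inv_cancel₀ (ha _)]
    ring
  rw [det_borderedMatrix_eq_mul hone hm, ← hprod]
  ring

lemma daDet_mul_prod (hq : ‖q‖ < 1) (ha : ∀ i, a i ≠ 0) (hb : ∀ i j, qp q (b j * a i) ≠ 0)
    (j : Fin (n + 1)) :
    daDet q a b * ∏ i, (1 - b j * a i) =
      (1 - (∏ i, a i) * ∏ i, b i) * daDet q a (Function.update b j (q * b j)) := by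
  have hA : ∏ i, a i ≠ 0 := prod_ne_zero_iff.2 fun i _ => ha i
  -- The shifts by `β = 0` and `β = bⱼ` give `D(b)` and `D(…, q bⱼ, …)` as multiples of the same
  -- determinant.
  have hD := prod_mul_det_borderedMatrix (β := 0) hq ha hb fun i r => by
    rw [zero_mul, sub_zero]
  have hD' := prod_mul_det_borderedMatrix hq ha hb
    fun i r => jacksonMoment_qpRatio_update (c := q • a⁻¹) hq (hb i j) r
  rw [prod_eq_zero (f := fun i => b i - b j) (mem_univ j) (sub_self _), mul_zero, sub_zero] at hD'
  simp only [mul_zero, sub_zero, prod_const_one] at hD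
  refine mul_left_cancel₀ hA ?_
  simp only [daDet, mul_comm (b j)]
  linear_combination (∏ i, (1 - a i * b j)) * hD - (1 - (∏ i, a i) * ∏ i, b i) * hD'

/-- The normalisation `D(b) ∏ᵢⱼ (bⱼ aᵢ)_∞`, whose q-difference equations have right-hand sides free
of denominators. -/
noncomputable def regDet (q : ℂ) (a b : Fin (n + 1) → ℂ) : ℂ :=
  daDet q a b * ∏ i, ∏ j, qp q (b j * a i)

lemma regDet_eq_mul_regDet_update (hq : ‖q‖ < 1) (ha : ∀ i, a i ≠ 0)
    (hb : ∀ i j, qp q (b j * a i) ≠ 0) (j : Fin (n + 1)) :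
    regDet q a b =
      (1 - (∏ i, a i) * ∏ i, b i) * regDet q a (Function.update b j (q * b j)) := by
  simp only [regDet, prod_qp_eq_mul_prod_update hq b j, prod_mul_distrib]
  rw [← mul_assoc, daDet_mul_prod hq ha hb j, mul_assoc]

lemma regDet_eq_mul_regDet_piecewise (hq : ‖q‖ < 1) (ha : ∀ i, a i ≠ 0)
    (hb : ∀ i j, qp q (b j * a i) ≠ 0) (S : Finset (Fin (n + 1))) :
    regDet q a b = (∏ m ∈ range #S, (1 - q ^ m * ((∏ i, a i) * ∏ i, b i))) *
      regDet q a (S.piecewise (q • b) b) := by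
  induction S using Finset.induction_on with
  | empty => simp
  | insert j S hj ih =>
    have hbS : ∀ i k, qp q (S.piecewise (q • b) b k * a i) ≠ 0 := fun i k => by
      by_cases hk : k ∈ S
      · simpa [hk, mul_assoc] using qp_pow_mul_ne_zero hq (hb i k) 1
      · simpa [hk] using hb i k
    have hprod : ∏ i, S.piecewise (q • b) b i = q ^ #S * ∏ i, b i := by
      rw [prod_piecewise, univ_inter, ← compl_eq_univ_sdiff, ← prod_mul_prod_compl S b]
      simp [prod_mul_distrib, mul_assoc]
    rw [ih, regDet_eq_mul_regDet_update hq ha hbS j, hprod, card_insert_of_notMem hj,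
      prod_range_succ, piecewise_insert, piecewise_eq_of_notMem _ _ _ hj, mul_left_comm (∏ i, a i)]
    simp [mul_assoc]

lemma regDet_eq_mul_regDet_pow_smul (hq : ‖q‖ < 1) (ha : ∀ i, a i ≠ 0)
    (hb : ∀ i j, qp q (b j * a i) ≠ 0) (N : ℕ) :
    regDet q a b = (∏ m ∈ range (N * (n + 1)), (1 - q ^ m * ((∏ i, a i) * ∏ i, b i))) *
      regDet q a (q ^ N • b) := by
  induction N with
  | zero => simp
  | succ N ih =>
    have hbN : ∀ i j, qp q ((q ^ N • b) j * a i) ≠ 0 := fun i j => by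
      simpa [mul_assoc] using qp_pow_mul_ne_zero hq (hb i j) N
    have hstep := regDet_eq_mul_regDet_piecewise hq ha hbN univ
    have hprod : ∏ i, (q ^ N • b) i = q ^ (N * (n + 1)) * ∏ i, b i := by
      simp [prod_mul_distrib, pow_mul]
    rw [piecewise_univ, smul_smul, ← pow_succ', hprod, card_univ, Fintype.card_fin] at hstep
    have hfactor : ∀ m, q ^ m * ((∏ i, a i) * (q ^ (N * (n + 1)) * ∏ i, b i)) =
        q ^ (N * (n + 1) + m) * ((∏ i, a i) * ∏ i, b i) := fun m => by ring
    simp only [hfactor] at hstep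
    rw [ih, hstep, ← mul_assoc, ← prod_range_add, ← Nat.succ_mul]

lemma tendsto_regDet_pow_smul (hq : ‖q‖ < 1) (a b : Fin (n + 1) → ℂ) :
    Tendsto (fun N : ℕ => regDet q a (q ^ N • b)) atTop (𝓝 (daDet q a 0)) := by
  have hdet : Tendsto (fun N : ℕ => daDet q a (q ^ N • b)) atTop (𝓝 (daDet q a 0)) := by
    refine (continuous_id.matrix_det.tendsto _).comp ?_
    refine tendsto_pi_nhds.2 fun i => tendsto_pi_nhds.2 fun s => ?_
    refine Fin.cases ?_ (fun r => ?_) s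
    · exact tendsto_const_nhds
    · exact tendsto_jacksonMoment_qpRatio hq (q • a⁻¹) b (a i) r
  have hprod : Tendsto (fun N : ℕ => ∏ i, ∏ j, qp q ((q ^ N • b) j * a i)) atTop (𝓝 1) := by
    have hcont : Continuous fun t : ℂ => ∏ i, ∏ j, qp q ((t • b) j * a i) :=
      continuous_finsetProd _ fun i _ => continuous_finsetProd _ fun j _ =>
        (continuous_qp hq).comp (by fun_prop)
    simpa [Function.comp_def] using
      (hcont.tendsto 0).comp (tendsto_pow_atTop_nhds_zero_of_norm_lt_one hq)
  simpa [regDet] using hdet.mul hprod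

lemma regDet_eq_qp_mul_daDet_zero (hq : ‖q‖ < 1) (ha : ∀ i, a i ≠ 0)
    (hb : ∀ i j, qp q (b j * a i) ≠ 0) :
    regDet q a b = qp q ((∏ i, a i) * ∏ i, b i) * daDet q a 0 := by
  have hmul : Tendsto (fun N : ℕ => N * (n + 1)) atTop atTop :=
    tendsto_id.atTop_mul_const' n.succ_pos
  refine tendsto_nhds_unique tendsto_const_nhds ((((tendsto_prod_range_qp hq _).comp hmul).mul
    (tendsto_regDet_pow_smul hq a b)).congr fun N => ?_)
  exact (regDet_eq_mul_regDet_pow_smul hq ha hb N).symm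

end Recursion

/-! ### Evaluation at vanishing `b` -/

lemma pow_succ_ne_one_of_norm_lt_one {K : Type*} [NormedDivisionRing K] {x : K} (hx : ‖x‖ < 1)
    (m : ℕ) : x ^ (m + 1) ≠ 1 := fun h => by
  have hlt : ‖x ^ (m + 1)‖ < 1 := by
    rw [norm_pow]
    exact pow_lt_one₀ (norm_nonneg x) hx m.succ_ne_zero
  rw [h, norm_one] at hlt
  exact lt_irrefl 1 hlt

section Evaluation

variable {n : ℕ} {q : ℂ} {a : Fin (n + 1) → ℂ} (hq : ‖q‖ < 1)
include hq

lemma qp_self_ne_zero : qp q q ≠ 0 := fun h => by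
  obtain ⟨m, hm⟩ := (qp_eq_zero_iff hq).1 h
  exact pow_succ_ne_one_of_norm_lt_one hq m (by rw [pow_succ, hm])

lemma daDet_smul_inv (hc : ∀ i j, qp q (q * (a j)⁻¹ * a i) ≠ 0) :
    daDet q a (q • a⁻¹) =
      (∏ r ∈ range n, (1 - q ^ (r + 1))⁻¹) * (Matrix.vandermonde a).det := by
  rw [daDet, ← det_borderedMatrix_mul_pow]
  congr 2
  funext i r
  exact jacksonMoment_of_eq_one hq
    (fun ν => qpRatio_self fun j => qp_mul_mul_pow_ne_zero hq (hc i j) ν) r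

-- Here `aⱼ = aᵢ q^(m+1)` and the weight vanishes at `aᵢ, …, aᵢ q^m`, so rows `i` and `j` agree.
lemma daDet_zero_eq_zero (ha : ∀ i, a i ≠ 0) {i j : Fin (n + 1)}
    (hij : qp q (q * (a j)⁻¹ * a i) = 0) : daDet q a 0 = 0 := by
  obtain ⟨m, hm⟩ := (qp_eq_zero_iff hq).1 hij
  have hj : a j = a i * q ^ (m + 1) := by
    have := ha j
    field_simp at hm
    linear_combination -hm
  have hne : i ≠ j := by
    rintro rfl
    exact pow_succ_ne_one_of_norm_lt_one hq m (mul_left_cancel₀ (ha i) (by rw [← hj, mul_one]))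
  have hweight : ∀ ν < m + 1, qpRatio q (q • a⁻¹) 0 (a i * q ^ ν) = 0 := fun ν hν => by
    refine qpRatio_eq_zero hq (j := j) (m := m - ν) ?_
    rw [← hm, ← pow_sub_mul_pow q (Nat.lt_succ_iff.1 hν)]
    simp only [Pi.smul_apply, Pi.inv_apply, smul_eq_mul]
    ring
  refine Matrix.det_zero_of_row_eq hne (funext fun s => ?_)
  refine Fin.cases rfl (fun r => ?_) s
  have hrows := jacksonMoment_mul_pow hweight r
  rw [← hj] at hrows
  exact hrows.symm

lemma qp_self_mul_daDet_zero (ha : ∀ i, a i ≠ 0) :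
    qp q q * daDet q a 0 =
      (Matrix.vandermonde a).det * ∏ i, ∏ j, qp q (q * (a j)⁻¹ * a i) := by
  by_cases hc : ∀ i j, qp q (q * (a j)⁻¹ * a i) ≠ 0
  · have heval := regDet_eq_qp_mul_daDet_zero (b := q • a⁻¹) hq ha hc
    have hprod : (∏ i, a i) * ∏ i, (q • a⁻¹) i = q ^ n * q := by
      simp [← prod_mul_distrib, mul_left_comm _ q, mul_inv_cancel₀ (ha _), pow_succ]
    have hfactors : ∏ r ∈ range n, (1 - q ^ r * q) ≠ 0 :=
      prod_ne_zero_iff.2 fun r _ => sub_ne_zero.2 (pow_succ_ne_one_of_norm_lt_one hq r).symm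
    rw [hprod, regDet, daDet_smul_inv hq hc] at heval
    rw [qp_eq_prod_range_mul hq q n, mul_assoc, ← heval]
    simp only [prod_inv_distrib, pow_succ, ← mul_assoc, mul_inv_cancel₀ hfactors, one_mul]
    rfl
  · push Not at hc
    obtain ⟨i, j, hij⟩ := hc
    rw [daDet_zero_eq_zero hq ha hij, mul_zero,
      prod_eq_zero (mem_univ i) (prod_eq_zero (mem_univ j) hij), mul_zero]

lemma mul_th_div {x y : ℂ} (hx : x ≠ 0) (hy : y ≠ 0) :
    y * th q (x / y) = (y - x) * (qp q (q * x⁻¹ * y) * qp q (q * y⁻¹ * x)) := by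
  have hxy : q * (x / y) = q * y⁻¹ * x := by ring
  have hyx : q / (x / y) = q * x⁻¹ * y := by field_simp
  rw [th, qp_eq_one_sub_mul hq (x / y), hxy, hyx]
  field_simp

lemma qp_self_pow_mul_prod_th (ha : ∀ i, a i ≠ 0) :
    qp q q ^ (n + 1) * ∏ i, ∏ j ∈ Ioi i, a j * th q (a i / a j) =
      (Matrix.vandermonde a).det * ∏ i, ∏ j, qp q (q * (a j)⁻¹ * a i) := by
  have hdiag : ∀ i, ∏ j, qp q (q * (a j)⁻¹ * a i) =
      qp q q * ∏ j ∈ {i}ᶜ, qp q (q * (a j)⁻¹ * a i) := fun i => by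
    rw [Fintype.prod_eq_mul_prod_compl i, mul_assoc q, inv_mul_cancel₀ (ha i), mul_one]
  simp only [mul_th_div hq (ha _) (ha _), prod_mul_distrib, hdiag, Matrix.det_vandermonde]
  rw [← prod_prod_Ioi_mul_eq_prod_prod_off_diag]
  simp only [prod_mul_distrib, prod_const, card_univ, Fintype.card_fin]
  ring

lemma daDet_zero (ha : ∀ i, a i ≠ 0) :
    daDet q a 0 = qp q q ^ n * ∏ i, ∏ j ∈ Ioi i, a j * th q (a i / a j) := by
  refine mul_left_cancel₀ (qp_self_ne_zero hq) ?_
  rw [qp_self_mul_daDet_zero hq ha, ← qp_self_pow_mul_prod_th hq ha, pow_succ', mul_assoc]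

end Evaluation

theorem evans_q_dixon_anderson_general {n : ℕ} {q : ℂ} (hq0 : q ≠ 0) (hq : ‖q‖ < 1)
    {a b : Fin (n + 1) → ℂ} (ha : ∀ i, a i ≠ 0)
    (hab : ∀ i j, ∀ m : ℕ, a i * b j ≠ (q ^ m)⁻¹) :
    (∑ i : Fin (n + 1), (-1 : ℂ) ^ (i : ℕ) * daSum q a b fun k => a (i.succAbove k)) =
      (1 - q) ^ n * qp q q ^ n * qp q ((∏ i, a i) * ∏ i, b i) /
          (∏ i, ∏ j, qp q (a i * b j)) *
        ∏ i, ∏ j ∈ Ioi i, a j * th q (a i / a j) := by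
  have hqp : ∀ i j, qp q (b j * a i) ≠ 0 := fun i j h => by
    obtain ⟨m, hm⟩ := (qp_eq_zero_iff hq).1 h
    exact hab i j m (eq_inv_of_mul_eq_one_right (by rw [mul_comm (a i), hm]))
  have hpole : ∏ i, ∏ j, qp q (b j * a i) ≠ 0 :=
    prod_ne_zero_iff.2 fun i _ => prod_ne_zero_iff.2 fun j _ => hqp i j
  have hdet : daDet q a b = qp q ((∏ i, a i) * ∏ i, b i) * daDet q a 0 /
      ∏ i, ∏ j, qp q (b j * a i) :=
    eq_div_of_mul_eq hpole (regDet_eq_qp_mul_daDet_zero hq ha hqp)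
  rw [sum_daSum_eq_daDet hq hq0 ha, hdet, daDet_zero hq ha]
  simp only [mul_comm (b _)]
  ring

/-- Evans's q-Dixon–Anderson summation. -/
theorem evans_q_dixon_anderson
    (q : ℝ) (hq0 : 0 < q) (hq1 : q < 1) (n : ℕ) (hn : 1 ≤ n)
    (a b : Fin (n + 1) → ℂ) (ha : ∀ i, a i ≠ 0) (hb : ∀ i, b i ≠ 0)
    (hbal : (q : ℝ) < ‖(∏ i, a i) * ∏ i, b i‖)
    (hab : ∀ i j, ∀ m : ℕ, a i * b j ≠ ((q : ℂ) ^ m)⁻¹) :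
    (∑ i : Fin (n + 1), (-1 : ℂ) ^ (i : ℕ) * daSum (q : ℂ) a b fun k => a (i.succAbove k)) =
      (1 - (q : ℂ)) ^ n * qp (q : ℂ) (q : ℂ) ^ n *
          qp (q : ℂ) ((∏ i, a i) * ∏ i, b i) /
          (∏ i, ∏ j, qp (q : ℂ) (a i * b j)) *
        ∏ i, ∏ j ∈ Finset.Ioi i, a j * th (q : ℂ) (a i / a j) :=
  evans_q_dixon_anderson_general (by exact_mod_cast hq0.ne')
    (by simpa [abs_of_pos hq0] using hq1) ha hab
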